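/- Let N ≥ 2 be an integer, let p > 1 and 0 < q < p, and let f, F > 0 satisfy f^p ≤ F. Then the infimum of ∫_{[0,1)} (M_N φ)^q dμ over all nonnegative measurable φ on [0,1) with ∫ φ dμ = f and ∫ φ^p dμ = F equals f^q. -/

import Mathlib

open MeasureTheory Set Filter

/-- The `N`-adic interval `[k/N^m, (k+1)/N^m)` at level `m`. -/
def adicItv (N m k : ℕ) : Set ℝ :=
  Set.Ico ((k : ℝ) / (N : ℝ) ^ m) (((k : ℝ) + 1) / (N : ℝ) ^ m)

/-- The average `(1/μ(I)) ∫_I |φ| dμ` of `φ` over the `N`-adic interval at level `m`, index `k`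
(its measure is `N^{-m}`). -/
noncomputable def adicAvg (N : ℕ) (φ : ℝ → ℝ) (m k : ℕ) : ℝ :=
  (N : ℝ) ^ m * ∫ y in adicItv N m k, |φ y|

/-- The `N`-adic maximal operator on `[0,1)`:
`M_N φ(x) = sup { (1/μ(I)) ∫_I |φ| dμ : x ∈ I, I an N-adic interval }`. -/
noncomputable def adicMax (N : ℕ) (φ : ℝ → ℝ) (x : ℝ) : ℝ :=
  sSup {r : ℝ | ∃ m k : ℕ, k < N ^ m ∧ x ∈ adicItv N m k ∧ r = adicAvg N φ m k}

/-!
**Lower bound.** The interval `[0, 1)` is itself `N`-adic, so `M_N φ ≥ f` wherever the averages of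
`φ` are bounded, and `∫ (M_N φ) ^ q ≥ f ^ q` follows once `(M_N φ) ^ q` is integrable (otherwise
the supremum and the integral would be the junk value `0`). Both facts come from the weak-type
inequality `s * μ {M_N φ > s} ≤ ∫ |φ|`, obtained by covering the superlevel set by maximal, hence
disjoint, `N`-adic intervals: for `φ` it gives almost everywhere bounded averages, and for `φ ^ p`,
through Jensen's inequality, a weak `L ^ p` bound on `M_N φ`, which is enough since `q < p`.

**Sharpness.** Concentrate the excess `p`-th moment on `[0, δ)`: let `φ` be `A` on `[0, δ)` and
`a ≤ f` elsewhere, with the prescribed moments, so that `A ≤ (F / δ) ^ (1 / p)`. The averages of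
`φ` over intervals containing `x` are at most `a + A * min 1 (δ / x)`, and
`min 1 (δ / x) ≤ (δ / x) ^ θ` with `1 / p < θ < min 1 (1 / q)` turns this into
`M_N φ x ≤ f + ε * x ^ (-θ)`, where `ε → 0` as `δ → 0` and `x ^ (-θ)` belongs to `L ^ q`.
-/

open scoped ENNReal Topology

section Integrability

variable {α : Type*} [MeasurableSpace α] {μ : Measure α} {g : α → ℝ} {p : ℝ}

lemma integrable_abs_rpow_iff (hg : AEStronglyMeasurable g μ) (hp : 0 < p) :
    Integrable (fun x ↦ |g x| ^ p) μ ↔ MemLp g (ENNReal.ofReal p) μ := by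
  simpa only [Real.norm_eq_abs, ENNReal.toReal_ofReal hp.le] using
    integrable_norm_rpow_iff hg (ENNReal.ofReal_pos.2 hp).ne' ENNReal.ofReal_ne_top

lemma memLp_rpow_Ioo {r q b : ℝ} (hq : 0 < q) (hb : 0 < b) (hrq : -1 < r * q) :
    MemLp (fun x : ℝ ↦ x ^ r) (ENNReal.ofReal q) (volume.restrict (Ioo 0 b)) := by
  have hmeas : Measurable fun x : ℝ ↦ x ^ r := by fun_prop
  rw [← integrable_abs_rpow_iff hmeas.aestronglyMeasurable hq]
  refine ((intervalIntegral.integrableOn_Ioo_rpow_iff hb).2 hrq).congr_fun ?_ measurableSet_Ioo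
  intro x hx
  simp only [abs_of_nonneg (Real.rpow_nonneg hx.1.le r), Real.rpow_mul hx.1.le]

lemma lintegral_Ioi_one_meas_lt_mul_rpow_lt_top {q : ℝ} {K : ℝ≥0∞} (hqp : q < p) (hK : K ≠ ∞)
    (hweak : ∀ t, 0 < t → ENNReal.ofReal (t ^ p) * μ {x | t < g x} ≤ K) :
    ∫⁻ t in Ioi (1 : ℝ), μ {x | t < g x} * ENNReal.ofReal (t ^ (q - 1)) < ∞ := by
  have hint : IntegrableOn (fun t : ℝ ↦ t ^ (-p + (q - 1))) (Ioi 1) :=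
    integrableOn_Ioi_rpow_of_lt (by linarith) one_pos
  have htail (t : ℝ) (ht : t ∈ Ioi (1 : ℝ)) :
      μ {x | t < g x} * ENNReal.ofReal (t ^ (q - 1)) ≤
        K * ENNReal.ofReal (t ^ (-p + (q - 1))) := by
    have ht0 : 0 < t := one_pos.trans ht
    have hle : μ {x | t < g x} ≤ K * ENNReal.ofReal (t ^ (-p)) := by
      rw [Real.rpow_neg ht0.le, ENNReal.ofReal_inv_of_pos (by positivity), ← div_eq_mul_inv,
        ENNReal.le_div_iff_mul_le (by simp [Real.rpow_pos_of_pos ht0]) (by simp), mul_comm]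
      exact hweak t ht0
    rw [Real.rpow_add ht0, ENNReal.ofReal_mul (by positivity), ← mul_assoc]
    gcongr
  calc _ ≤ ∫⁻ t in Ioi (1 : ℝ), K * ENNReal.ofReal (t ^ (-p + (q - 1))) :=
        setLIntegral_mono' measurableSet_Ioi htail
    _ = K * ∫⁻ t in Ioi (1 : ℝ), ENNReal.ofReal (t ^ (-p + (q - 1))) :=
        lintegral_const_mul' _ _ hK
    _ < ∞ := ENNReal.mul_lt_top hK.lt_top hint.lintegral_lt_top

lemma integrable_rpow_of_weak_type [IsFiniteMeasure μ] {q : ℝ} {K : ℝ≥0∞} (hg : AEMeasurable g μ)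
    (hg0 : 0 ≤ᵐ[μ] g) (hq : 0 < q) (hqp : q < p) (hK : K ≠ ∞)
    (hweak : ∀ t, 0 < t → ENNReal.ofReal (t ^ p) * μ {x | t < g x} ≤ K) :
    Integrable (fun x ↦ g x ^ q) μ := by
  have hnear : ∫⁻ t in Ioc (0 : ℝ) 1, μ {x | t < g x} * ENNReal.ofReal (t ^ (q - 1)) < ∞ := by
    have hint : IntegrableOn (fun t : ℝ ↦ t ^ (q - 1)) (Ioc 0 1) :=
      (intervalIntegrable_iff_integrableOn_Ioc_of_le zero_le_one).1
        (intervalIntegral.intervalIntegrable_rpow' (by linarith))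
    calc _ ≤ ∫⁻ t in Ioc (0 : ℝ) 1, μ univ * ENNReal.ofReal (t ^ (q - 1)) := by
          gcongr
          exact subset_univ _
      _ = μ univ * ∫⁻ t in Ioc (0 : ℝ) 1, ENNReal.ofReal (t ^ (q - 1)) :=
          lintegral_const_mul' _ _ (measure_ne_top μ univ)
      _ < ∞ := ENNReal.mul_lt_top (measure_lt_top μ univ) hint.lintegral_lt_top
  have hfar := lintegral_Ioi_one_meas_lt_mul_rpow_lt_top hqp hK hweak
  refine ⟨(hg.pow_const q).aestronglyMeasurable, ?_⟩
  rw [hasFiniteIntegral_iff_ofReal (hg0.mono fun x hx ↦ Real.rpow_nonneg hx q),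
    lintegral_rpow_eq_lintegral_meas_lt_mul μ hg0 hg hq, ← Ioc_union_Ioi_eq_Ioi zero_le_one]
  exact ENNReal.mul_lt_top ENNReal.ofReal_lt_top
    ((lintegral_union_le _ _ _).trans_lt (ENNReal.add_lt_top.2 ⟨hnear, hfar⟩))

end Integrability

section SmallPerturbations

variable {α : Type*} [MeasurableSpace α] {μ : Measure α} [IsFiniteMeasure μ] {g : α → ℝ} {c q : ℝ}

lemma integrable_const_add_mul_rpow {ε : ℝ} (hc : 0 ≤ c) (hε : 0 ≤ ε) (hq : 0 ≤ q)
    (hg0 : ∀ᵐ x ∂μ, 0 ≤ g x) (hg : MemLp g (ENNReal.ofReal q) μ) :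
    Integrable (fun x ↦ (c + ε * g x) ^ q) μ := by
  refine ((memLp_const c).add (hg.const_mul ε)).integrable_norm_rpow'.congr ?_
  filter_upwards [hg0] with x hx
  rw [ENNReal.toReal_ofReal hq, Pi.add_apply, Real.norm_of_nonneg (by positivity)]

lemma tendsto_integral_const_add_mul_rpow (hc : 0 ≤ c) (hq : 0 ≤ q) (hg0 : ∀ᵐ x ∂μ, 0 ≤ g x)
    (hg : MemLp g (ENNReal.ofReal q) μ) :
    Tendsto (fun ε ↦ ∫ x, (c + ε * g x) ^ q ∂μ) (𝓝[>] 0) (𝓝 (∫ _, c ^ q ∂μ)) := by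
  have hunit : ∀ᶠ ε in 𝓝[>] (0 : ℝ), ε ∈ Ioo 0 1 := Ioo_mem_nhdsGT one_pos
  refine tendsto_integral_filter_of_dominated_convergence (fun x ↦ (c + 1 * g x) ^ q) ?_ ?_
    (integrable_const_add_mul_rpow hc zero_le_one hq hg0 hg) ?_
  · filter_upwards [hunit] with ε hε
    exact (integrable_const_add_mul_rpow hc hε.1.le hq hg0 hg).aestronglyMeasurable
  · filter_upwards [hunit] with ε hε
    filter_upwards [hg0] with x hx
    have hε0 : 0 ≤ ε := hε.1.le
    rw [Real.norm_of_nonneg (by positivity)]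
    gcongr
    exact hε.2.le
  · refine Eventually.of_forall fun x ↦ Tendsto.rpow_const ?_ (Or.inr hq)
    have hcont : Continuous fun ε : ℝ ↦ c + ε * g x := by fun_prop
    simpa using (hcont.tendsto 0).mono_left nhdsWithin_le_nhds

end SmallPerturbations

section AdicIntervals

variable {N m n k l : ℕ} {x : ℝ}

lemma mem_adicItv_iff (hN : 0 < N) : x ∈ adicItv N m k ↔ 0 ≤ x ∧ ⌊x * (N : ℝ) ^ m⌋₊ = k := by
  have hNm : (0 : ℝ) < (N : ℝ) ^ m := by positivity
  rw [adicItv, mem_Ico, div_le_iff₀ hNm, lt_div_iff₀ hNm]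
  constructor
  · rintro ⟨hkx, hxk⟩
    have hx : 0 ≤ x := nonneg_of_mul_nonneg_left (k.cast_nonneg.trans hkx) hNm
    exact ⟨hx, (Nat.floor_eq_iff (by positivity)).2 ⟨hkx, hxk⟩⟩
  · rintro ⟨hx, hfloor⟩
    exact (Nat.floor_eq_iff (by positivity)).1 hfloor

lemma floor_mul_pow_lt_pow (hN : 0 < N) (hx : x ∈ Ico (0 : ℝ) 1) (m : ℕ) :
    ⌊x * (N : ℝ) ^ m⌋₊ < N ^ m := by
  have hNm : (0 : ℝ) < (N : ℝ) ^ m := by positivity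
  rw [Nat.floor_lt (mul_nonneg hx.1 hNm.le), Nat.cast_pow]
  exact mul_lt_of_lt_one_left hNm hx.2

lemma measurableSet_adicItv (N m k : ℕ) : MeasurableSet (adicItv N m k) := measurableSet_Ico

lemma adicItv_zero_zero (N : ℕ) : adicItv N 0 0 = Ico 0 1 := by simp [adicItv]

lemma volume_real_adicItv (N m k : ℕ) : volume.real (adicItv N m k) = ((N : ℝ) ^ m)⁻¹ := by
  rw [adicItv, Real.volume_real_Ico, ← sub_div, add_sub_cancel_left, one_div,
    max_eq_left (by positivity)]

lemma volume_adicItv_ne_top (N m k : ℕ) : volume (adicItv N m k) ≠ ∞ := measure_Ico_lt_top.ne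

lemma adicItv_subset_Ico_zero_one (hN : 0 < N) (hk : k < N ^ m) :
    adicItv N m k ⊆ Ico (0 : ℝ) 1 := by
  have hk' : (k : ℝ) + 1 ≤ (N : ℝ) ^ m := by exact_mod_cast hk
  exact Ico_subset_Ico (by positivity) (div_le_one_of_le₀ hk' (by positivity))

lemma adicItv_subset_adicItv (hN : 0 < N) (hmn : m ≤ n) (hxm : x ∈ adicItv N m k)
    (hxn : x ∈ adicItv N n l) : adicItv N n l ⊆ adicItv N m k := by
  have hparent (y : ℝ) : ⌊y * (N : ℝ) ^ m⌋₊ = ⌊y * (N : ℝ) ^ n⌋₊ / N ^ (n - m) := by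
    rw [← Nat.floor_div_natCast, Nat.cast_pow, mul_div_assoc, div_eq_mul_inv,
      ← pow_sub₀ _ (by positivity) (Nat.sub_le n m), Nat.sub_sub_self hmn]
  intro y hy
  rw [mem_adicItv_iff hN] at *
  exact ⟨hy.1, by rw [hparent, hy.2, ← hxn.2, ← hparent, hxm.2]⟩

-- The subfamily consists of the intervals of `t` that meet no interval of `t` of lower level.
lemma exists_pairwiseDisjoint_biUnion_adicItv_eq (hN : 0 < N) (t : Set (ℕ × ℕ)) :
    ∃ u ⊆ t, u.PairwiseDisjoint (fun i ↦ adicItv N i.1 i.2) ∧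
      ⋃ i ∈ u, adicItv N i.1 i.2 = ⋃ i ∈ t, adicItv N i.1 i.2 := by
  classical
  let u : Set (ℕ × ℕ) :=
    {i ∈ t | ∀ j ∈ t, j.1 < i.1 → Disjoint (adicItv N j.1 j.2) (adicItv N i.1 i.2)}
  have hut : u ⊆ t := sep_subset _ _
  refine ⟨u, hut, fun i hi j hj hij ↦ ?_, (biUnion_subset_biUnion_left hut).antisymm ?_⟩
  · rcases lt_trichotomy i.1 j.1 with hlt | heq | hgt
    · exact hj.2 i hi.1 hlt
    · refine disjoint_left.2 fun x hxi hxj ↦ hij (Prod.ext heq ?_)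
      rw [mem_adicItv_iff hN] at hxi hxj
      rw [← hxi.2, ← hxj.2, heq]
    · exact (hi.2 j hj.1 hgt).symm
  · refine iUnion₂_subset fun i hi x hx ↦ ?_
    have hex : ∃ m, ∃ k, (m, k) ∈ t ∧ x ∈ adicItv N m k := ⟨i.1, i.2, hi, hx⟩
    obtain ⟨k, hk, hxk⟩ := Nat.find_spec hex
    refine mem_biUnion (x := (Nat.find hex, k)) ⟨hk, fun j hj hlt ↦ ?_⟩ hxk
    refine disjoint_left.2 fun y hyj hyk ↦ Nat.find_min hex hlt ⟨j.2, hj, ?_⟩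
    exact adicItv_subset_adicItv hN hlt.le hyj hyk hxk

lemma mul_measure_biUnion_adicItv_le (hN : 0 < N) {μ : Measure ℝ} {g : ℝ → ℝ≥0∞} {c : ℝ≥0∞}
    {t : Set (ℕ × ℕ)}
    (h : ∀ i ∈ t, c * μ (adicItv N i.1 i.2) ≤ ∫⁻ x in adicItv N i.1 i.2, g x ∂μ) :
    c * μ (⋃ i ∈ t, adicItv N i.1 i.2) ≤ ∫⁻ x in ⋃ i ∈ t, adicItv N i.1 i.2, g x ∂μ := by
  obtain ⟨u, hut, hu, hunion⟩ := exists_pairwiseDisjoint_biUnion_adicItv_eq hN t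
  have hmeas : ∀ i ∈ u, MeasurableSet (adicItv N i.1 i.2) := fun i _ ↦ measurableSet_adicItv N _ _
  rw [← hunion, measure_biUnion u.to_countable hu hmeas,
    lintegral_biUnion u.to_countable hmeas hu, ← ENNReal.tsum_mul_left]
  exact ENNReal.tsum_le_tsum fun i ↦ h i (hut i.2)

end AdicIntervals

section Averages

variable {N m k : ℕ} {φ : ℝ → ℝ} {x : ℝ}

lemma adicAvg_nonneg (N : ℕ) (φ : ℝ → ℝ) (m k : ℕ) : 0 ≤ adicAvg N φ m k :=
  mul_nonneg (by positivity) (integral_nonneg fun _ ↦ abs_nonneg _)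

lemma adicAvg_eq_setAverage (N : ℕ) (φ : ℝ → ℝ) (m k : ℕ) :
    adicAvg N φ m k = ⨍ y in adicItv N m k, |φ y| := by
  rw [setAverage_eq, volume_real_adicItv, inv_inv, smul_eq_mul, adicAvg]

lemma adicAvg_rpow_le (hN : 0 < N) {p : ℝ} (hp : 1 ≤ p)
    (hφ : MemLp φ (ENNReal.ofReal p) (volume.restrict (adicItv N m k))) :
    adicAvg N φ m k ^ p ≤ adicAvg N (fun y ↦ |φ y| ^ p) m k := by
  have hvol : volume (adicItv N m k) ≠ 0 := by
    refine (measureReal_ne_zero_iff (volume_adicItv_ne_top N m k)).1 ?_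
    rw [volume_real_adicItv]
    positivity
  have : IsFiniteMeasure (volume.restrict (adicItv N m k)) :=
    isFiniteMeasure_restrict.2 (volume_adicItv_ne_top N m k)
  have hint : IntegrableOn (fun y ↦ |φ y|) (adicItv N m k) :=
    (hφ.integrable (ENNReal.one_le_ofReal.2 hp)).abs
  have hintp : IntegrableOn (fun y ↦ |φ y| ^ p) (adicItv N m k) :=
    (integrable_abs_rpow_iff hφ.1 (by linarith)).2 hφ
  rw [adicAvg_eq_setAverage, adicAvg_eq_setAverage]
  simp only [abs_of_nonneg (Real.rpow_nonneg (abs_nonneg _) p)]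
  exact (convexOn_rpow hp).map_set_average_le
    (Real.continuous_rpow_const (by linarith)).continuousOn isClosed_Ici hvol
    (volume_adicItv_ne_top N m k) (Eventually.of_forall fun y ↦ abs_nonneg (φ y)) hint hintp

lemma ofReal_mul_volume_adicItv_le (hN : 0 < N) {s : ℝ} (hs : s ≤ adicAvg N φ m k) :
    ENNReal.ofReal s * volume (adicItv N m k) ≤ ∫⁻ y in adicItv N m k, ‖φ y‖ₑ := by
  have hNm : (0 : ℝ) < (N : ℝ) ^ m := by positivity
  have hint : 0 ≤ ∫ y in adicItv N m k, |φ y| := integral_nonneg fun _ ↦ abs_nonneg _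
  have hs' : s * ((N : ℝ) ^ m)⁻¹ ≤ ∫ y in adicItv N m k, |φ y| := by
    rwa [← div_eq_mul_inv, div_le_iff₀' hNm]
  calc ENNReal.ofReal s * volume (adicItv N m k)
      = ENNReal.ofReal (s * ((N : ℝ) ^ m)⁻¹) := by
        rw [ENNReal.ofReal_mul' (by positivity), ← volume_real_adicItv N m k,
          ofReal_measureReal (volume_adicItv_ne_top N m k)]
    _ ≤ ‖∫ y in adicItv N m k, |φ y|‖ₑ := by
        rw [Real.enorm_of_nonneg hint]
        exact ENNReal.ofReal_le_ofReal hs'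
    _ ≤ ∫⁻ y in adicItv N m k, ‖|φ y|‖ₑ := enorm_integral_le_lintegral_enorm _
    _ = ∫⁻ y in adicItv N m k, ‖φ y‖ₑ := by simp only [Real.enorm_abs]

/-- The conditional expectation of `|φ|` on the `N`-adic intervals of level `m`, for `x ≥ 0`: the
average over the interval containing `x`, whose index is `⌊x * N ^ m⌋₊`. It makes `M_N φ` a supremum
over levels only. -/
noncomputable def adicCondExp (N : ℕ) (φ : ℝ → ℝ) (m : ℕ) (x : ℝ) : ℝ :=
  adicAvg N φ m ⌊x * (N : ℝ) ^ m⌋₊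

lemma measurable_adicCondExp (N : ℕ) (φ : ℝ → ℝ) (m : ℕ) : Measurable (adicCondExp N φ m) :=
  measurable_from_nat.comp (Nat.measurable_floor.comp (measurable_id.mul_const _))

lemma adicCondExp_zero (N : ℕ) (φ : ℝ → ℝ) (hx : x ∈ Ico (0 : ℝ) 1) :
    adicCondExp N φ 0 x = ∫ y in Ico (0 : ℝ) 1, |φ y| := by
  have hfloor : ⌊x * (N : ℝ) ^ 0⌋₊ = 0 := by
    simpa only [pow_zero, mul_one, Nat.floor_eq_zero] using hx.2
  rw [adicCondExp, hfloor, adicAvg, adicItv_zero_zero, pow_zero, one_mul]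

lemma adicCondExp_rpow_le (hN : 0 < N) {p : ℝ} (hp : 1 ≤ p)
    (hφ : MemLp φ (ENNReal.ofReal p) (volume.restrict (Ico 0 1))) (hx : x ∈ Ico (0 : ℝ) 1) :
    adicCondExp N φ m x ^ p ≤ adicCondExp N (fun y ↦ |φ y| ^ p) m x :=
  adicAvg_rpow_le hN hp <| hφ.mono_measure <| Measure.restrict_mono_set volume <|
    adicItv_subset_Ico_zero_one hN (floor_mul_pow_lt_pow hN hx m)

lemma adicMax_eq_iSup (hN : 0 < N) (φ : ℝ → ℝ) (hx : x ∈ Ico (0 : ℝ) 1) :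
    adicMax N φ x = ⨆ m, adicCondExp N φ m x := by
  rw [adicMax, iSup]
  congr 1
  ext r
  constructor
  · rintro ⟨m, k, -, hxk, rfl⟩
    exact ⟨m, congrArg (adicAvg N φ m) ((mem_adicItv_iff hN).1 hxk).2⟩
  · rintro ⟨m, rfl⟩
    exact ⟨m, _, floor_mul_pow_lt_pow hN hx m, (mem_adicItv_iff hN).2 ⟨hx.1, rfl⟩, rfl⟩

lemma adicMax_nonneg (N : ℕ) (φ : ℝ → ℝ) (x : ℝ) : 0 ≤ adicMax N φ x := by
  refine Real.sSup_nonneg ?_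
  rintro r ⟨m, k, -, -, rfl⟩
  exact adicAvg_nonneg N φ m k

lemma aemeasurable_adicMax (hN : 0 < N) (φ : ℝ → ℝ) :
    AEMeasurable (adicMax N φ) (volume.restrict (Ico 0 1)) :=
  ⟨fun x ↦ ⨆ m, adicCondExp N φ m x, .iSup (measurable_adicCondExp N φ),
    ae_restrict_of_forall_mem measurableSet_Ico fun _ hx ↦ adicMax_eq_iSup hN φ hx⟩

end Averages

section MaximalInequalities

variable {N : ℕ} {φ : ℝ → ℝ} {p : ℝ}

lemma ofReal_mul_volume_exists_le_adicCondExp_le (hN : 0 < N) (φ : ℝ → ℝ) (s : ℝ) :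
    ENNReal.ofReal s * volume {x ∈ Ico (0 : ℝ) 1 | ∃ m, s ≤ adicCondExp N φ m x} ≤
      ∫⁻ x in Ico (0 : ℝ) 1, ‖φ x‖ₑ := by
  let t : Set (ℕ × ℕ) := {i | i.2 < N ^ i.1 ∧ s ≤ adicAvg N φ i.1 i.2}
  have hcover : {x ∈ Ico (0 : ℝ) 1 | ∃ m, s ≤ adicCondExp N φ m x} ⊆
      ⋃ i ∈ t, adicItv N i.1 i.2 := by
    rintro x ⟨hx, m, hm⟩
    exact mem_biUnion (x := (m, ⌊x * (N : ℝ) ^ m⌋₊)) ⟨floor_mul_pow_lt_pow hN hx m, hm⟩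
      ((mem_adicItv_iff hN).2 ⟨hx.1, rfl⟩)
  calc _ ≤ ENNReal.ofReal s * volume (⋃ i ∈ t, adicItv N i.1 i.2) := by gcongr
    _ ≤ ∫⁻ x in ⋃ i ∈ t, adicItv N i.1 i.2, ‖φ x‖ₑ :=
        mul_measure_biUnion_adicItv_le hN fun i hi ↦ ofReal_mul_volume_adicItv_le hN hi.2
    _ ≤ ∫⁻ x in Ico (0 : ℝ) 1, ‖φ x‖ₑ :=
        lintegral_mono_set (iUnion₂_subset fun i hi ↦ adicItv_subset_Ico_zero_one hN hi.1)

lemma ofReal_rpow_mul_volume_lt_adicMax_le (hN : 0 < N) (hp : 1 ≤ p)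
    (hφ : MemLp φ (ENNReal.ofReal p) (volume.restrict (Ico 0 1))) {s : ℝ} (hs : 0 ≤ s) :
    ENNReal.ofReal (s ^ p) * volume.restrict (Ico 0 1) {x | s < adicMax N φ x} ≤
      ∫⁻ x in Ico (0 : ℝ) 1, ‖|φ x| ^ p‖ₑ := by
  refine le_trans ?_ (ofReal_mul_volume_exists_le_adicCondExp_le hN (fun x ↦ |φ x| ^ p) (s ^ p))
  rw [Measure.restrict_apply' measurableSet_Ico]
  gcongr
  rintro x ⟨hsx, hx⟩
  rw [mem_ofPred_eq, adicMax_eq_iSup hN φ hx] at hsx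
  obtain ⟨m, hm⟩ := exists_lt_of_lt_ciSup hsx
  exact ⟨hx, m, (Real.rpow_le_rpow hs hm.le (by linarith)).trans (adicCondExp_rpow_le hN hp hφ hx)⟩

lemma ae_bddAbove_range_adicCondExp (hN : 0 < N) (hφ : IntegrableOn φ (Ico 0 1)) :
    ∀ᵐ x ∂volume.restrict (Ico (0 : ℝ) 1), BddAbove (range fun m ↦ adicCondExp N φ m x) := by
  rw [ae_iff, Measure.restrict_apply' measurableSet_Ico]
  set A := {x | ¬BddAbove (range fun m ↦ adicCondExp N φ m x)} ∩ Ico (0 : ℝ) 1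
  have hbound (n : ℕ) : n * volume A ≤ ∫⁻ x in Ico (0 : ℝ) 1, ‖φ x‖ₑ := by
    refine le_trans ?_ (ofReal_mul_volume_exists_le_adicCondExp_le hN φ n)
    rw [ENNReal.ofReal_natCast]
    gcongr
    rintro x ⟨hunbdd, hx⟩
    obtain ⟨_, ⟨m, rfl⟩, hm⟩ := not_bddAbove_iff.1 hunbdd n
    exact ⟨hx, m, hm.le⟩
  have htop : ∞ * volume A < ∞ := by
    refine lt_of_le_of_lt ?_ hφ.hasFiniteIntegral
    rw [← ENNReal.iSup_natCast, ENNReal.iSup_mul]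
    exact iSup_le hbound
  by_contra hA
  exact htop.ne (ENNReal.top_mul hA)

lemma integrableOn_adicMax_rpow (hN : 0 < N) {q : ℝ} (hp : 1 ≤ p) (hq : 0 < q) (hqp : q < p)
    (hφ : MemLp φ (ENNReal.ofReal p) (volume.restrict (Ico 0 1))) :
    IntegrableOn (fun x ↦ adicMax N φ x ^ q) (Ico 0 1) := by
  have hφp : IntegrableOn (fun x ↦ |φ x| ^ p) (Ico 0 1) :=
    (integrable_abs_rpow_iff hφ.1 (by linarith)).2 hφ
  exact integrable_rpow_of_weak_type (aemeasurable_adicMax hN φ)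
    (Eventually.of_forall (adicMax_nonneg N φ)) hq hqp hφp.hasFiniteIntegral.ne
    fun s hs ↦ ofReal_rpow_mul_volume_lt_adicMax_le hN hp hφ hs.le

theorem rpow_integral_abs_le_integral_adicMax_rpow (hN : 0 < N) {q : ℝ} (hp : 1 ≤ p) (hq : 0 < q)
    (hqp : q < p) (hφ : MemLp φ (ENNReal.ofReal p) (volume.restrict (Ico 0 1))) :
    (∫ x in Ico (0 : ℝ) 1, |φ x|) ^ q ≤ ∫ x in Ico (0 : ℝ) 1, adicMax N φ x ^ q := by
  have hle : ∀ᵐ x ∂volume.restrict (Ico (0 : ℝ) 1),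
      (∫ y in Ico (0 : ℝ) 1, |φ y|) ^ q ≤ adicMax N φ x ^ q := by
    filter_upwards [ae_bddAbove_range_adicCondExp hN
      (hφ.integrable (ENNReal.one_le_ofReal.2 hp)), ae_restrict_mem measurableSet_Ico]
      with x hbdd hx
    rw [← adicCondExp_zero N φ hx, adicMax_eq_iSup hN φ hx]
    exact Real.rpow_le_rpow (adicAvg_nonneg N φ _ _) (le_ciSup hbdd 0) hq.le
  simpa using integral_mono_ae (integrable_const _) (integrableOn_adicMax_rpow hN hp hq hqp hφ) hle

end MaximalInequalities

section TwoStep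

variable {δ A a p : ℝ}

/-- The step function equal to `A` on `(-∞, δ)` and to `a` on `[δ, ∞)`. For small `δ` these are the
near-extremizers: almost all of their `p`-th moment sits on a set of measure `δ`. -/
noncomputable def twoStep (δ A a x : ℝ) : ℝ := if x < δ then A else a

lemma measurable_twoStep (δ A a : ℝ) : Measurable (twoStep δ A a) :=
  Measurable.ite measurableSet_Iio measurable_const measurable_const

lemma twoStep_nonneg (hA : 0 ≤ A) (ha : 0 ≤ a) (x : ℝ) : 0 ≤ twoStep δ A a x := by
  rw [twoStep]
  split_ifs <;> assumption

lemma twoStep_rpow (δ A a p x : ℝ) : twoStep δ A a x ^ p = twoStep δ (A ^ p) (a ^ p) x :=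
  apply_ite (· ^ p) _ _ _

lemma setIntegral_twoStep {μ : Measure ℝ} {s : Set ℝ} (hs : μ s ≠ ∞) (hsm : MeasurableSet s)
    (δ A a : ℝ) :
    ∫ x in s, twoStep δ A a x ∂μ = A * μ.real (s ∩ Iio δ) + a * μ.real (s \ Iio δ) := by
  have : Fact (μ s < ∞) := ⟨hs.lt_top⟩
  have hint : IntegrableOn (twoStep δ A a) s μ :=
    Integrable.of_bound (measurable_twoStep δ A a).aestronglyMeasurable (max |A| |a|)
      (Eventually.of_forall fun x ↦ by rw [twoStep]; split_ifs <;> simp)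
  have hleft : ∫ x in s ∩ Iio δ, twoStep δ A a x ∂μ = ∫ _ in s ∩ Iio δ, A ∂μ :=
    setIntegral_congr_fun (hsm.inter measurableSet_Iio) fun x hx ↦ if_pos hx.2
  have hright : ∫ x in s \ Iio δ, twoStep δ A a x ∂μ = ∫ _ in s \ Iio δ, a ∂μ :=
    setIntegral_congr_fun (hsm.diff measurableSet_Iio) fun x hx ↦ if_neg hx.2
  rw [← integral_inter_add_sdiff measurableSet_Iio hint, hleft, hright, setIntegral_const,
    setIntegral_const, smul_eq_mul, smul_eq_mul, mul_comm A, mul_comm a]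

lemma setIntegral_Ico_zero_one_twoStep (hδ : δ ∈ Icc (0 : ℝ) 1) (A a : ℝ) :
    ∫ x in Ico (0 : ℝ) 1, twoStep δ A a x = δ * A + (1 - δ) * a := by
  have hdiff : Ico (0 : ℝ) 1 \ Iio δ = Ico δ 1 := by
    ext x
    simp only [Set.mem_sdiff, mem_Ico, mem_Iio, not_lt]
    exact ⟨fun h ↦ ⟨h.2, h.1.2⟩, fun h ↦ ⟨⟨hδ.1.trans h.1, h.2⟩, h.1⟩⟩
  rw [setIntegral_twoStep measure_Ico_lt_top.ne measurableSet_Ico, Ico_inter_Iio,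
    min_eq_right hδ.2, hdiff, Real.volume_real_Ico_of_le hδ.1, Real.volume_real_Ico_of_le hδ.2]
  ring

lemma volume_real_Ico_inter_Iio_le {u v x : ℝ} (hu : 0 ≤ u) (hx : x ∈ Ico u v) (hx0 : 0 < x)
    (hδ : 0 < δ) : volume.real (Ico u v ∩ Iio δ) ≤ volume.real (Ico u v) * min 1 (δ / x) := by
  have huv : u < v := hx.1.trans_lt hx.2
  rw [Real.volume_real_Ico_of_le huv.le, Ico_inter_Iio, Real.volume_real_Ico]
  have hmin : 0 ≤ min 1 (δ / x) := by positivity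
  refine max_le ?_ (mul_nonneg (by linarith) hmin)
  rcases le_total x δ with hxδ | hδx
  · rw [min_eq_left ((one_le_div hx0).2 hxδ)]
    linarith [min_le_left v δ]
  · have hδv : δ ≤ v := hδx.trans hx.2.le
    rw [min_eq_right ((div_le_one hx0).2 hδx), min_eq_right hδv]
    calc δ - u ≤ (v - u) * (δ / v) := by
          rw [← mul_div_assoc, le_div_iff₀ (hx0.trans hx.2)]
          linarith [mul_le_mul_of_nonneg_left hδv hu]
      _ ≤ (v - u) * (δ / x) := mul_le_mul_of_nonneg_left
          (div_le_div_of_nonneg_left hδ.le hx0 hx.2.le) (sub_nonneg.2 huv.le)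

lemma adicMax_twoStep_le {N : ℕ} (hN : 0 < N) (hδ : 0 < δ) (hA : 0 ≤ A) (ha : 0 ≤ a) {x : ℝ}
    (hx : 0 < x) : adicMax N (twoStep δ A a) x ≤ a + A * min 1 (δ / x) := by
  refine Real.sSup_le ?_ (by positivity)
  rintro _ ⟨m, k, -, hxk, rfl⟩
  have hvol : 0 < volume.real (adicItv N m k) := by
    rw [volume_real_adicItv]
    positivity
  have hleft := volume_real_Ico_inter_Iio_le (by positivity) hxk hx hδ
  have hright : volume.real (adicItv N m k \ Iio δ) ≤ volume.real (adicItv N m k) :=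
    measureReal_mono sdiff_subset measure_Ico_lt_top.ne
  rw [adicAvg_eq_setAverage, setAverage_eq, smul_eq_mul, inv_mul_le_iff₀ hvol]
  simp only [abs_of_nonneg (twoStep_nonneg hA ha _)]
  calc ∫ y in adicItv N m k, twoStep δ A a y
      = A * volume.real (adicItv N m k ∩ Iio δ) + a * volume.real (adicItv N m k \ Iio δ) :=
        setIntegral_twoStep measure_Ico_lt_top.ne (measurableSet_adicItv N m k) δ A a
    _ ≤ A * (volume.real (adicItv N m k) * min 1 (δ / x)) + a * volume.real (adicItv N m k) := by
        gcongr
        exact hleft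
    _ = volume.real (adicItv N m k) * (a + A * min 1 (δ / x)) := by ring

lemma exists_two_values_of_moments {f F : ℝ} (hp : 0 < p) (hf : 0 ≤ f) (hδ : 0 < δ)
    (hfF : f ^ p ≤ F) (hFδ : F ≤ f ^ p * δ ^ (1 - p)) :
    ∃ A a, 0 ≤ A ∧ a ∈ Icc 0 f ∧ δ * A + (1 - δ) * a = f ∧ δ * A ^ p + (1 - δ) * a ^ p = F := by
  let A : ℝ → ℝ := fun a ↦ (f - (1 - δ) * a) / δ
  let moment : ℝ → ℝ := fun a ↦ δ * A a ^ p + (1 - δ) * a ^ p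
  have hcont : Continuous moment := by
    have hpow : Continuous fun y : ℝ ↦ y ^ p := Real.continuous_rpow_const hp.le
    have hA : Continuous A := by fun_prop
    exact ((hpow.comp hA).const_mul δ).add (hpow.const_mul (1 - δ))
  have hleft : F ≤ moment 0 := by
    have hmoment : moment 0 = f ^ p * δ ^ (1 - p) := by
      simp only [moment, A]
      rw [mul_zero, sub_zero, Real.zero_rpow hp.ne', mul_zero, add_zero, Real.div_rpow hf hδ.le,
        Real.rpow_sub hδ, Real.rpow_one]
      ring
    rwa [hmoment]
  have hright : moment f ≤ F := by
    have hAf : A f = f := by simp only [A]; field_simp; ring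
    have hmoment : moment f = f ^ p := by simp only [moment, hAf]; ring
    rwa [hmoment]
  obtain ⟨a, ha, haF⟩ := intermediate_value_Icc' hf hcont.continuousOn ⟨hright, hleft⟩
  refine ⟨A a, a, div_nonneg ?_ hδ.le, ha, ?_, haF⟩
  · linarith [mul_nonneg hδ.le ha.1, ha.2]
  · simp only [A]
    field_simp
    ring

lemma min_one_le_rpow {y θ : ℝ} (hy : 0 ≤ y) (hθ : θ ∈ Icc (0 : ℝ) 1) : min 1 y ≤ y ^ θ := by
  rcases le_total y 1 with hy1 | hy1
  · exact (min_le_right 1 y).trans (Real.self_le_rpow_of_le_one hy hy1 hθ.2)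
  · exact (min_le_left 1 y).trans (Real.one_le_rpow hy1 hθ.1)

lemma eventually_nhdsGT_le_mul_rpow {c C r : ℝ} (hc : 0 < c) (hr : r < 0) :
    ∀ᶠ δ in 𝓝[>] (0 : ℝ), C ≤ c * δ ^ r :=
  ((tendsto_rpow_neg_nhdsGT_zero hr).const_mul_atTop hc).eventually_ge_atTop C

lemma eventually_nhdsGT_mul_rpow_le {c ε r : ℝ} (hε : 0 < ε) (hr : 0 < r) :
    ∀ᶠ δ in 𝓝[>] (0 : ℝ), c * δ ^ r ≤ ε := by
  have hlim : Tendsto (fun δ : ℝ ↦ c * δ ^ r) (𝓝 0) (𝓝 0) := by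
    simpa [Real.zero_rpow hr.ne'] using
      ((Real.continuous_rpow_const hr.le).tendsto 0).const_mul c
  exact (hlim.mono_left nhdsWithin_le_nhds).eventually_le_const hε

lemma exists_moments_adicMax_le {N : ℕ} (hN : 0 < N) {f F θ ε : ℝ} (hp : 1 < p) (hf : 0 < f)
    (hfF : f ^ p ≤ F) (hθ : θ ∈ Ioc p⁻¹ 1) (hε : 0 < ε) :
    ∃ φ : ℝ → ℝ, Measurable φ ∧ (∀ x, 0 ≤ φ x) ∧ ∫ x in Ico (0 : ℝ) 1, φ x = f ∧
      ∫ x in Ico (0 : ℝ) 1, φ x ^ p = F ∧ ∀ x, 0 < x → adicMax N φ x ≤ f + ε * x ^ (-θ) := by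
  have hp0 : 0 < p := one_pos.trans hp
  have hF : 0 ≤ F := (Real.rpow_nonneg hf.le p).trans hfF
  have hθ01 : θ ∈ Icc (0 : ℝ) 1 := ⟨(inv_pos.2 hp0).le.trans hθ.1.le, hθ.2⟩
  obtain ⟨δ, hδ, hFδ, hεδ⟩ := (Eventually.and (Ioo_mem_nhdsGT one_pos) <|
    (eventually_nhdsGT_le_mul_rpow (Real.rpow_pos_of_pos hf p) (sub_neg.2 hp)).and <|
    eventually_nhdsGT_mul_rpow_le (c := F ^ p⁻¹) hε (sub_pos.2 hθ.1)).exists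
  obtain ⟨A, a, hA, ha, hmean, hmoment⟩ := exists_two_values_of_moments hp0 hf.le hδ.1 hfF hFδ
  have hδ' : δ ∈ Icc (0 : ℝ) 1 := ⟨hδ.1.le, hδ.2.le⟩
  have hA_le : A ≤ (F / δ) ^ p⁻¹ := by
    rw [Real.le_rpow_inv_iff_of_pos hA (div_nonneg hF hδ.1.le) hp0, le_div_iff₀' hδ.1, ← hmoment]
    exact le_add_of_nonneg_right (mul_nonneg (sub_nonneg.2 hδ.2.le) (Real.rpow_nonneg ha.1 p))
  refine ⟨twoStep δ A a, measurable_twoStep δ A a, twoStep_nonneg hA ha.1, ?_, ?_, fun x hx ↦ ?_⟩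
  · rw [setIntegral_Ico_zero_one_twoStep hδ', hmean]
  · simp only [twoStep_rpow]
    rw [setIntegral_Ico_zero_one_twoStep hδ', hmoment]
  · calc adicMax N (twoStep δ A a) x
        ≤ a + A * min 1 (δ / x) := adicMax_twoStep_le hN hδ.1 hA ha.1 hx
      _ ≤ f + (F / δ) ^ p⁻¹ * (δ / x) ^ θ := by
          have hratio : min 1 (δ / x) ≤ (δ / x) ^ θ := min_one_le_rpow (div_pos hδ.1 hx).le hθ01
          have hmin : 0 ≤ min 1 (δ / x) := le_min zero_le_one (div_pos hδ.1 hx).le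
          exact add_le_add ha.2 (mul_le_mul hA_le hratio hmin (hA.trans hA_le))
      _ = f + F ^ p⁻¹ * δ ^ (θ - p⁻¹) * x ^ (-θ) := by
          rw [Real.div_rpow hF hδ.1.le, Real.div_rpow hδ.1.le hx.le, Real.rpow_sub hδ.1,
            Real.rpow_neg hx.le]
          ring
      _ ≤ f + ε * x ^ (-θ) := by gcongr

end TwoStep

theorem exists_moments_integral_adicMax_rpow_lt {N : ℕ} (hN : 0 < N) {p q f F w : ℝ} (hp : 1 < p)
    (hq : 0 < q) (hqp : q < p) (hf : 0 < f) (hfF : f ^ p ≤ F) (hw : f ^ q < w) :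
    ∃ φ : ℝ → ℝ, Measurable φ ∧ (∀ x, 0 ≤ φ x) ∧ ∫ x in Ico (0 : ℝ) 1, φ x = f ∧
      ∫ x in Ico (0 : ℝ) 1, φ x ^ p = F ∧ ∫ x in Ico (0 : ℝ) 1, adicMax N φ x ^ q < w := by
  obtain ⟨θ, hpθ, hθ⟩ : ∃ θ, p⁻¹ < θ ∧ θ < min 1 q⁻¹ :=
    exists_between (lt_min (inv_lt_one_of_one_lt₀ hp) (inv_strictAnti₀ hq hqp))
  obtain ⟨hθ1, hθq⟩ := lt_min_iff.1 hθ
  have hLq : MemLp (fun x : ℝ ↦ x ^ (-θ)) (ENNReal.ofReal q) (volume.restrict (Ioo 0 1)) := by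
    refine memLp_rpow_Ioo hq one_pos ?_
    rw [neg_mul, neg_lt_neg_iff]
    exact (lt_div_iff₀ hq).1 (by rwa [one_div])
  have hnonneg : ∀ᵐ x ∂volume.restrict (Ioo (0 : ℝ) 1), 0 ≤ x ^ (-θ) :=
    ae_restrict_of_forall_mem measurableSet_Ioo fun x hx ↦ Real.rpow_nonneg hx.1.le _
  have hlim : Tendsto (fun ε ↦ ∫ x in Ioo (0 : ℝ) 1, (f + ε * x ^ (-θ)) ^ q) (𝓝[>] 0)
      (𝓝 (f ^ q)) := by
    simpa using tendsto_integral_const_add_mul_rpow hf.le hq.le hnonneg hLq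
  obtain ⟨ε, hεw, hε⟩ := ((hlim.eventually_lt_const hw).and self_mem_nhdsWithin).exists
  obtain ⟨φ, hmeas, hφ0, hmean, hmoment, hmax⟩ :=
    exists_moments_adicMax_le hN hp hf hfF ⟨hpθ, hθ1.le⟩ hε
  refine ⟨φ, hmeas, hφ0, hmean, hmoment, lt_of_le_of_lt ?_ hεw⟩
  rw [integral_Ico_eq_integral_Ioo]
  refine integral_mono_of_nonneg
    (Eventually.of_forall fun x ↦ Real.rpow_nonneg (adicMax_nonneg N φ x) q)
    (integrable_const_add_mul_rpow hf.le (le_of_lt hε) hq.le hnonneg hLq) ?_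
  exact ae_restrict_of_forall_mem measurableSet_Ioo fun x hx ↦
    Real.rpow_le_rpow (adicMax_nonneg N φ x) (hmax x hx.1) hq.le

theorem stmt10 (N : ℕ) (hN : 2 ≤ N) (p q f F : ℝ) (hp : 1 < p) (hq0 : 0 < q) (hqp : q < p)
    (hf : 0 < f) (hF : 0 < F) (hfF : f ^ p ≤ F) :
    sInf {y : ℝ | ∃ φ : ℝ → ℝ, Measurable φ ∧ (∀ x ∈ Set.Ico (0:ℝ) 1, 0 ≤ φ x) ∧
        (∫ x in Set.Ico (0:ℝ) 1, φ x) = f ∧ (∫ x in Set.Ico (0:ℝ) 1, φ x ^ p) = F ∧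
        y = ∫ x in Set.Ico (0:ℝ) 1, adicMax N φ x ^ q} = f ^ q := by
  have hN0 : 0 < N := by omega
  refine csInf_eq_of_forall_ge_of_forall_gt_exists_lt ?_ ?_ fun w hw ↦ ?_
  · obtain ⟨φ, hmeas, hφ0, hmean, hmoment, -⟩ :=
      exists_moments_integral_adicMax_rpow_lt hN0 hp hq0 hqp hf hfF (lt_add_one _)
    exact ⟨_, φ, hmeas, fun x _ ↦ hφ0 x, hmean, hmoment, rfl⟩
  · rintro _ ⟨φ, hmeas, hφ0, hmean, hmoment, rfl⟩
    have habs : EqOn (fun x ↦ |φ x|) φ (Ico 0 1) := fun x hx ↦ abs_of_nonneg (hφ0 x hx)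
    have hLp : MemLp φ (ENNReal.ofReal p) (volume.restrict (Ico 0 1)) := by
      have hint : IntegrableOn (fun x ↦ φ x ^ p) (Ico 0 1) :=
        not_imp_comm.1 integral_undef (hmoment.trans_ne hF.ne')
      refine (integrable_abs_rpow_iff hmeas.aestronglyMeasurable (by linarith)).1 ?_
      exact hint.congr_fun (fun x hx ↦ congrArg (· ^ p) (habs hx).symm) measurableSet_Ico
    rw [← hmean, ← setIntegral_congr_fun measurableSet_Ico habs]
    exact rpow_integral_abs_le_integral_adicMax_rpow hN0 hp.le hq0 hqp hLp
  · obtain ⟨φ, hmeas, hφ0, hmean, hmoment, hlt⟩ :=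
      exists_moments_integral_adicMax_rpow_lt hN0 hp hq0 hqp hf hfF hw
    exact ⟨_, ⟨φ, hmeas, fun x _ ↦ hφ0 x, hmean, hmoment, rfl⟩, hlt⟩
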